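/- Let n ≥ 5 and let ρ ∈ A(n) satisfy ρ(n−1) = n−2. Then ρ(n−2) = n−1 and the restriction of ρ to {0,1,…,n−3} is a permutation of {0,1,…,n−3} lying in A(n−2). -/

import Mathlib

/-- The set `A(n)` of permutations `ρ` of `{0,1,…,n−1}` with `ρ(0)=0`, `ρ(1)=2`,
and `ρ(i)≠i`, `ρ(i)≤i+1` for all `i` with `1 ≤ i ≤ n−1`. -/
def molsA (n : ℕ) : Finset (Equiv.Perm (Fin n)) :=
  Finset.univ.filter fun ρ =>
    (∀ i : Fin n, (i : ℕ) = 0 → (ρ i : ℕ) = 0) ∧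
    (∀ i : Fin n, (i : ℕ) = 1 → (ρ i : ℕ) = 2) ∧
    (∀ i : Fin n, 1 ≤ (i : ℕ) → (ρ i : ℕ) ≠ (i : ℕ) ∧ (ρ i : ℕ) ≤ (i : ℕ) + 1)

/-- `a(n)`, the number of such permutations. -/
def molsa (n : ℕ) : ℕ := (molsA n).card

section Perm

open Equiv

variable {m n : ℕ} {ρ : Perm (Fin n)}

/-- The restriction of a permutation of `{0,…,n-1}` to an invariant initial segment
`{0,…,m-1}`, transported from the subtype `{i // i < m}` to `Fin m`. -/
def restrictInitial (hmn : m ≤ n) (ρ : Perm (Fin n))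
    (hρ : ∀ i, (ρ i : ℕ) < m ↔ (i : ℕ) < m) : Perm (Fin m) :=
  (Fin.castLEquiv hmn).symm.permCongr (ρ.subtypePerm hρ)

theorem val_restrictInitial (hmn : m ≤ n) (hρ : ∀ i, (ρ i : ℕ) < m ↔ (i : ℕ) < m)
    (i : Fin m) : (restrictInitial hmn ρ hρ i : ℕ) = ρ (Fin.castLE hmn i) :=
  rfl

theorem val_apply_penultimate_eq_last (hn : 2 ≤ n) (hle : ∀ i, (ρ i : ℕ) ≤ i + 1)
    (hlast : (ρ ⟨n - 1, by omega⟩ : ℕ) ≠ n - 1) :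
    (ρ ⟨n - 2, by omega⟩ : ℕ) = n - 1 := by
  -- As `ρ i ≤ i + 1`, only `n - 2` and `n - 1` can be sent to `n - 1`.
  obtain ⟨j, hj⟩ := ρ.surjective ⟨n - 1, by omega⟩
  have hval : (ρ j : ℕ) = n - 1 := congrArg Fin.val hj
  have hj_ne : (j : ℕ) ≠ n - 1 := by
    intro hj_val
    have hj_last : j = ⟨n - 1, by omega⟩ := Fin.ext hj_val
    exact hlast (hj_last ▸ hval)
  have hj_ge := hle j
  have hj_pen : j = ⟨n - 2, by omega⟩ := Fin.ext (by dsimp only; omega)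
  exact hj_pen ▸ hval

theorem val_apply_lt_sub_two_iff (hn : 2 ≤ n)
    (hpen : (ρ ⟨n - 2, by omega⟩ : ℕ) = n - 1) (hlast : (ρ ⟨n - 1, by omega⟩ : ℕ) = n - 2)
    (i : Fin n) : (ρ i : ℕ) < n - 2 ↔ (i : ℕ) < n - 2 := by
  have hpen_iff : (ρ i : ℕ) = n - 1 ↔ (i : ℕ) = n - 2 := by
    rw [← hpen, Fin.val_inj, ρ.apply_eq_iff_eq, Fin.ext_iff]
  have hlast_iff : (ρ i : ℕ) = n - 2 ↔ (i : ℕ) = n - 1 := by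
    rw [← hlast, Fin.val_inj, ρ.apply_eq_iff_eq, Fin.ext_iff]
  omega

end Perm

section molsA

variable {m n : ℕ} {ρ : Equiv.Perm (Fin n)}

theorem mem_molsA : ρ ∈ molsA n ↔
    (∀ i : Fin n, (i : ℕ) = 0 → (ρ i : ℕ) = 0) ∧
    (∀ i : Fin n, (i : ℕ) = 1 → (ρ i : ℕ) = 2) ∧
    (∀ i : Fin n, 1 ≤ (i : ℕ) → (ρ i : ℕ) ≠ i ∧ (ρ i : ℕ) ≤ i + 1) := by
  simp only [molsA, Finset.mem_filter, Finset.mem_univ, true_and]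

theorem val_apply_le_succ_of_mem_molsA (hρ : ρ ∈ molsA n) (i : Fin n) :
    (ρ i : ℕ) ≤ i + 1 := by
  obtain ⟨hzero, -, hpos⟩ := mem_molsA.mp hρ
  rcases Nat.eq_zero_or_pos i with hi | hi
  · simp [hzero i hi]
  · exact (hpos i hi).2

theorem restrictInitial_mem_molsA (hmn : m ≤ n) (hρ : ρ ∈ molsA n)
    (hinv : ∀ i, (ρ i : ℕ) < m ↔ (i : ℕ) < m) : restrictInitial hmn ρ hinv ∈ molsA m := by
  obtain ⟨hzero, hone, hpos⟩ := mem_molsA.mp hρ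
  simp only [mem_molsA, val_restrictInitial]
  exact ⟨fun i => hzero (i.castLE hmn), fun i => hone (i.castLE hmn),
    fun i => hpos (i.castLE hmn)⟩

end molsA

/-- If `n ≥ 5` and `ρ ∈ A(n)` satisfies `ρ(n−1) = n−2`, then `ρ(n−2) = n−1` and the
restriction of `ρ` to `{0,1,…,n−3}` is a permutation of `{0,1,…,n−3}` lying in `A(n−2)`. -/
theorem molsA_restrict (n : ℕ) (hn : 5 ≤ n) (ρ : Equiv.Perm (Fin n)) (hρ : ρ ∈ molsA n)
    (h : (ρ ⟨n - 1, by omega⟩ : ℕ) = n - 2) :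
    (ρ ⟨n - 2, by omega⟩ : ℕ) = n - 1 ∧
    ∃ ρ' ∈ molsA (n - 2),
      ∀ i : Fin (n - 2), (ρ' i : ℕ) = (ρ (Fin.castLE (by omega) i) : ℕ) := by
  have hpen : (ρ ⟨n - 2, by omega⟩ : ℕ) = n - 1 :=
    val_apply_penultimate_eq_last (by omega) (val_apply_le_succ_of_mem_molsA hρ) (by omega)
  have hinv := val_apply_lt_sub_two_iff (by omega) hpen h
  exact ⟨hpen, restrictInitial (n.sub_le 2) ρ hinv,
    restrictInitial_mem_molsA (n.sub_le 2) hρ hinv, val_restrictInitial (n.sub_le 2) hinv⟩
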